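/- Let {μ_v}_{v∈G} be a σ-dimensional quasi-conformal density on the Bowditch boundary ∂G. If μ_1 gives positive measure to the set of conical points of ∂G, then the Poincaré series Σ_{g∈G} exp(−σ d(1,g)) diverges; in particular σ ≤ δ_G. -/

import Mathlib

open Filter Topology Set
open scoped ENNReal NNReal

/-- The word length of `g` with respect to a generating set `S`. -/
noncomputable def wlen {G : Type*} [Group G] (S : Set G) (g : G) : ℕ :=
  sInf {n : ℕ | ∃ w : List G, (∀ x ∈ w, x ∈ S) ∧ w.length = n ∧ w.prod = g}

/-- The word metric on `G` with respect to a generating set `S`. -/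
noncomputable def wdist {G : Type*} [Group G] (S : Set G) (g h : G) : ℕ :=
  wlen S (g⁻¹ * h)

/-- The exponential growth rate of a subset `A` of `G` with respect to the word metric of `S`:
`limsup (1/n) log #(A ∩ B(1,n))`. -/
noncomputable def growthRateOn {G : Type*} [Group G] (S : Set G) (A : Set G) : ℝ :=
  Filter.limsup
    (fun n : ℕ => Real.log (Nat.card {g : G // g ∈ A ∧ wlen S g ≤ n}) / (n : ℝ))
    Filter.atTop

/-- The exponential growth rate of `G` with respect to the word metric of `S`. -/
noncomputable def growthRate {G : Type*} [Group G] (S : Set G) : ℝ :=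
  growthRateOn S Set.univ

/-- `S` is a finite symmetric generating set of `G` not containing the identity. -/
def IsSymmGen {G : Type*} [Group G] (S : Set G) : Prop :=
  S.Finite ∧ Subgroup.closure S = ⊤ ∧ (∀ s ∈ S, s⁻¹ ∈ S) ∧ (1 : G) ∉ S

/-- A group is elementary if it is finite or a finite extension of a cyclic group,
i.e. it has a cyclic subgroup of finite index. -/
def IsElementaryGroup (G : Type*) [Group G] : Prop :=
  ∃ (g : G) (H : Subgroup G), H = Subgroup.zpowers g ∧ H.FiniteIndex

/-- The critical exponent of the Poincaré series `∑_{a ∈ A} exp(-s |a|_S)`. -/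
noncomputable def poincareExp {G : Type*} [Group G] (S : Set G) (A : Set G) : ℝ :=
  sInf {s : ℝ | Summable (fun a : A => Real.exp (-(s * (wlen S (a : G) : ℝ))))}
/-- A metric space is geodesic if every pair of points is joined by an isometrically
parametrized path. -/
def IsGeodesicSpace (X : Type*) [MetricSpace X] : Prop :=
  ∀ x y : X, ∃ f : ℝ → X, f 0 = x ∧ f (dist x y) = y ∧
    ∀ s ∈ Set.Icc (0 : ℝ) (dist x y), ∀ t ∈ Set.Icc (0 : ℝ) (dist x y),
      dist (f s) (f t) = |s - t|

/-- Gromov hyperbolicity, via the four-point condition on Gromov products. -/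
def IsGromovHyperbolic (X : Type*) [MetricSpace X] : Prop :=
  ∃ δ : ℝ, 0 ≤ δ ∧ ∀ x y z w : X,
    min (dist x w + dist y w - dist x y) (dist y w + dist z w - dist y z) - 2 * δ ≤
      dist x w + dist z w - dist x z

/-- A (metrically) proper isometric action: orbits are discrete with finite multiplicity. -/
def ProperAction {G : Type*} [Group G] {X : Type*} [MetricSpace X]
    (ρ : G →* X ≃ᵢ X) : Prop :=
  ∀ x : X, ∀ r : ℝ, {g : G | dist x (ρ g x) ≤ r}.Finite

/-- The (setwise) stabilizer of a subset `U` of `X` under the action `ρ`. -/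
def horoStab {G : Type*} [Group G] {X : Type*} [MetricSpace X]
    (ρ : G →* X ≃ᵢ X) (U : Set X) : Set G :=
  {g : G | (fun x => ρ g x) '' U = U}

/-- A cusp-uniform action: a proper isometric action together with a `G`-invariant system of
open horoballs (each with infinite, parabolic, stabilizer) such that the action on the
complement of the horoballs is cocompact. -/
structure IsCuspUniform {G : Type*} [Group G] {X : Type*} [MetricSpace X]
    (ρ : G →* X ≃ᵢ X) (𝕌 : Set (Set X)) : Prop where
  proper : ProperAction ρ
  horo_open : ∀ U ∈ 𝕌, IsOpen U
  horo_inv : ∀ (g : G), ∀ U ∈ 𝕌, (fun x => ρ g x) '' U ∈ 𝕌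
  horo_par : ∀ U ∈ 𝕌, (horoStab ρ U).Infinite
  cocompact : ∃ K : Set X, IsCompact K ∧ (⋃₀ 𝕌)ᶜ ⊆ ⋃ g : G, (fun x => ρ g x) '' K

/-- A witness that `G` is hyperbolic relative to the collection `Ps` of peripheral subgroups:
a cusp-uniform action on a proper geodesic hyperbolic space whose horoball stabilizers
(the maximal parabolic subgroups) are precisely the conjugates of members of `Ps`. -/
structure RelHypWitness (G : Type*) [Group G] (Ps : Set (Subgroup G)) where
  X : Type
  [ms : MetricSpace X]
  proper : ProperSpace X
  geodesic : IsGeodesicSpace X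
  hyperbolic : IsGromovHyperbolic X
  ρ : G →* X ≃ᵢ X
  horoballs : Set (Set X)
  cusp : IsCuspUniform ρ horoballs
  peri_max : ∀ U ∈ horoballs, ∃ P ∈ Ps, ∃ g : G,
      horoStab ρ U = (fun x => g * x * g⁻¹) '' (P : Set G)
  peri_real : ∀ P ∈ Ps, ∃ U ∈ horoballs, horoStab ρ U = (P : Set G)

/-- `G` is hyperbolic relative to the collection of subgroups `Ps`. -/
def IsRelHypWrt (G : Type*) [Group G] (Ps : Set (Subgroup G)) : Prop :=
  Nonempty (RelHypWitness G Ps)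

/-- `G` is a relatively hyperbolic group (relative to some finite collection of subgroups). -/
def IsRelativelyHyperbolicGroup (G : Type*) [Group G] : Prop :=
  ∃ Ps : Set (Subgroup G), Ps.Finite ∧ IsRelHypWrt G Ps

/-- The growth rate of the quotient group `G ⧸ Γ` with respect to the image of `S`. -/
noncomputable def quotGrowthRate {G : Type*} [Group G] (S : Set G)
    (Γ : Subgroup G) (h : Γ.Normal) : ℝ :=
  @growthRate (G ⧸ Γ) (@QuotientGroup.Quotient.group G _ Γ h)
    ((fun g : G => (QuotientGroup.mk g : G ⧸ Γ)) '' S)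

/-- The quotient `G ⧸ Γ` is a relatively hyperbolic group. -/
def quotIsRelHyp {G : Type*} [Group G] (Γ : Subgroup G) (h : Γ.Normal) : Prop :=
  @IsRelativelyHyperbolicGroup (G ⧸ Γ) (@QuotientGroup.Quotient.group G _ Γ h)

/-- The critical exponent of the orbital counting function of `A ⊆ G` for the action `ρ`
at basepoint `o`. -/
noncomputable def critExpOn {G : Type*} [Group G] {X : Type*} [MetricSpace X]
    (ρ : G →* X ≃ᵢ X) (o : X) (A : Set G) : ℝ :=
  Filter.limsup
    (fun n : ℕ =>
      Real.log (Nat.card {g : G // g ∈ A ∧ dist o (ρ g o) ≤ (n : ℝ)}) / (n : ℝ))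
    Filter.atTop

/-- The critical exponent (growth rate) of the action `ρ` of `G` on `X` at basepoint `o`. -/
noncomputable def critExp {G : Type*} [Group G] {X : Type*} [MetricSpace X]
    (ρ : G →* X ≃ᵢ X) (o : X) : ℝ :=
  critExpOn ρ o Set.univ

/-- The displacement of the coset `c ∈ G ⧸ Γ` in the quotient metric space `X ⧸ Γ`:
`d̄(Γo, Γ(go)) = inf_{γ ∈ Γ} d(o, γ g o)`. -/
noncomputable def quotDisp {G : Type*} [Group G] {X : Type*} [MetricSpace X]
    (ρ : G →* X ≃ᵢ X) (o : X) (Γ : Subgroup G) (c : G ⧸ Γ) : ℝ :=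
  ⨅ g : {g : G // (QuotientGroup.mk g : G ⧸ Γ) = c}, dist o (ρ (g : G) o)

/-- The critical exponent of the induced action of `G ⧸ Γ` on the quotient metric space
`X ⧸ Γ` equipped with the quotient metric. -/
noncomputable def quotCritExp {G : Type*} [Group G] {X : Type*} [MetricSpace X]
    (ρ : G →* X ≃ᵢ X) (o : X) (Γ : Subgroup G) : ℝ :=
  Filter.limsup
    (fun n : ℕ =>
      Real.log (Nat.card {c : G ⧸ Γ // quotDisp ρ o Γ c ≤ (n : ℝ)}) / (n : ℝ))
    Filter.atTop

/-- The parabolic gap property: every maximal parabolic subgroup (horoball stabilizer) has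
critical exponent strictly less than that of `G`. -/
def ParabolicGap {G : Type*} [Group G] {X : Type*} [MetricSpace X]
    (ρ : G →* X ≃ᵢ X) (o : X) (𝕌 : Set (Set X)) : Prop :=
  ∀ U ∈ 𝕌, critExpOn ρ o (horoStab ρ U) < critExp ρ o
/-- `γ` restricted to `{0, …, m}` is a geodesic in the Cayley graph of `(G,S)`. -/
def IsGeodesicSeq {G : Type*} [Group G] (S : Set G) (γ : ℕ → G) (m : ℕ) : Prop :=
  ∀ i ≤ m, ∀ j ≤ m, wdist S (γ i) (γ j) = ((i : ℤ) - (j : ℤ)).natAbs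

/-- `γ` is a geodesic ray in the Cayley graph of `(G,S)`. -/
def IsGeodesicRay {G : Type*} [Group G] (S : Set G) (γ : ℕ → G) : Prop :=
  ∀ i j : ℕ, wdist S (γ i) (γ j) = ((i : ℤ) - (j : ℤ)).natAbs

/-- The collection `ℙ` of peripheral (left) cosets of the peripheral subgroups `Ps`. -/
def periCosets {G : Type*} [Group G] (Ps : Set (Subgroup G)) : Set (Set G) :=
  {A | ∃ g : G, ∃ P ∈ Ps, A = (fun x => g * x) '' (P : Set G)}

/-- The point `γ i` of the geodesic `γ : {0,…,m} → G` is `(ε,R)`-deep in some member of `ℙ`: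
both endpoints of `γ` lie outside `B(γ i, R)` and `γ ∩ B(γ i, R) ⊆ N_ε(A)` for some `A ∈ ℙ`. -/
def deepAt {G : Type*} [Group G] (S : Set G) (ℙ : Set (Set G)) (γ : ℕ → G) (m i : ℕ)
    (ε R : ℝ) : Prop :=
  ∃ A ∈ ℙ, R < (wdist S (γ 0) (γ i) : ℝ) ∧ R < (wdist S (γ m) (γ i) : ℝ) ∧
    ∀ j ≤ m, (wdist S (γ i) (γ j) : ℝ) ≤ R → ∃ a ∈ A, (wdist S (γ j) a : ℝ) ≤ ε

/-- The point `γ i` is an `(ε,R)`-transition point of the geodesic `γ : {0,…,m} → G`. -/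
def transitionAt {G : Type*} [Group G] (S : Set G) (ℙ : Set (Set G)) (γ : ℕ → G) (m i : ℕ)
    (ε R : ℝ) : Prop :=
  ¬ deepAt S ℙ γ m i ε R

/-- The point `γ i` of the geodesic ray `γ` is `(ε,R)`-deep in some member of `ℙ`. -/
def deepAtRay {G : Type*} [Group G] (S : Set G) (ℙ : Set (Set G)) (γ : ℕ → G) (i : ℕ)
    (ε R : ℝ) : Prop :=
  ∃ A ∈ ℙ, R < (wdist S (γ 0) (γ i) : ℝ) ∧
    ∀ j : ℕ, (wdist S (γ i) (γ j) : ℝ) ≤ R → ∃ a ∈ A, (wdist S (γ j) a : ℝ) ≤ ε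

/-- The point `γ i` is an `(ε,R)`-transition point of the geodesic ray `γ`. -/
def transitionAtRay {G : Type*} [Group G] (S : Set G) (ℙ : Set (Set G)) (γ : ℕ → G) (i : ℕ)
    (ε R : ℝ) : Prop :=
  ¬ deepAtRay S ℙ γ i ε R

/-- The cone `Ω_r(g)`: elements `h` such that some word geodesic `[1,h]` meets `B(g,r)`. -/
def cone {G : Type*} [Group G] (S : Set G) (r : ℝ) (g : G) : Set G :=
  {h | ∃ (γ : ℕ → G) (m : ℕ), IsGeodesicSeq S γ m ∧ γ 0 = 1 ∧ γ m = h ∧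
      ∃ i ≤ m, (wdist S (γ i) g : ℝ) ≤ r}

/-- The partial cone `Ω_{r,ε,R}(g)`: elements `h` such that some word geodesic `[1,h]` meets
`B(g,r)` and, moreover, either `d(1,h) ≤ d(1,g) + 2R` or this geodesic has an
`(ε,R)`-transition point at distance at most `2R` from `g`. -/
def partialCone {G : Type*} [Group G] (S : Set G) (ℙ : Set (Set G)) (r ε R : ℝ) (g : G) :
    Set G :=
  {h | ∃ (γ : ℕ → G) (m : ℕ), IsGeodesicSeq S γ m ∧ γ 0 = 1 ∧ γ m = h ∧
      (∃ i ≤ m, (wdist S (γ i) g : ℝ) ≤ r) ∧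
      ((wdist S 1 h : ℝ) ≤ (wdist S 1 g : ℝ) + 2 * R ∨
        ∃ i ≤ m, transitionAt S ℙ γ m i ε R ∧ (wdist S (γ i) g : ℝ) ≤ 2 * R)}

/-- The partial cone `Ω_{ε,R}(g)` of geodesics passing through `g`. -/
def partialConeThrough {G : Type*} [Group G] (S : Set G) (ℙ : Set (Set G)) (ε R : ℝ)
    (g : G) : Set G :=
  {h | ∃ (γ : ℕ → G) (m : ℕ), IsGeodesicSeq S γ m ∧ γ 0 = 1 ∧ γ m = h ∧
      (∃ i ≤ m, γ i = g) ∧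
      ((wdist S 1 h : ℝ) ≤ (wdist S 1 g : ℝ) + 2 * R ∨
        ∃ i ≤ m, transitionAt S ℙ γ m i ε R ∧ (wdist S (γ i) g : ℝ) ≤ 2 * R)}

/-- The annulus `A(g,n,Δ) = {h : n − Δ ≤ d(1,h) − d(1,g) < n + Δ}`. -/
def annulus {G : Type*} [Group G] (S : Set G) (g : G) (n Δ : ℝ) : Set G :=
  {h | n - Δ ≤ (wdist S 1 h : ℝ) - (wdist S 1 g : ℝ) ∧
       (wdist S 1 h : ℝ) - (wdist S 1 g : ℝ) < n + Δ}
/-- The boundary of `G` in the compactification `Z ⊇ ι(G)`. -/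
def bdryZ {G : Type*} {Z : Type*} (ι : G → Z) : Set Z := (Set.range ι)ᶜ

/-- Geodesic rays in `𝒢(G,S)` issuing from `v` and converging to `ξ ∈ Z`. -/
def raysTo {G : Type*} [Group G] {Z : Type*} [TopologicalSpace Z] (S : Set G) (ι : G → Z)
    (ξ : Z) (v : G) : Set (ℕ → G) :=
  {γ | γ 0 = v ∧ IsGeodesicRay S γ ∧
    Filter.Tendsto (fun n => ι (γ n)) Filter.atTop (nhds ξ)}

/-- Geodesic rays in `𝒢(G,S)` converging to `ξ ∈ Z` (with arbitrary initial point). -/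
def raysEnding {G : Type*} [Group G] {Z : Type*} [TopologicalSpace Z] (S : Set G)
    (ι : G → Z) (ξ : Z) : Set (ℕ → G) :=
  {γ | IsGeodesicRay S γ ∧ Filter.Tendsto (fun n => ι (γ n)) Filter.atTop (nhds ξ)}

/-- The set of conical limit points of the action of `G` on the boundary `Z ∖ ι(G)`. -/
def conicalPts (G : Type*) [Group G] {Z : Type*} [TopologicalSpace Z] [MulAction G Z]
    (ι : G → Z) : Set Z :=
  {ξ | ξ ∈ bdryZ ι ∧ ∃ (gs : ℕ → G) (a b : Z), a ∈ bdryZ ι ∧ b ∈ bdryZ ι ∧ a ≠ b ∧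
      ∀ ζ ∈ bdryZ ι, ζ ≠ ξ →
        Filter.Tendsto (fun n => gs n • ξ) Filter.atTop (nhds a) ∧
        Filter.Tendsto (fun n => gs n • ζ) Filter.atTop (nhds b)}

/-- `q` is a bounded parabolic point: its stabilizer is infinite and acts properly and
cocompactly on `∂G ∖ {q}`. -/
def IsBddParabolicPt (G : Type*) [Group G] {Z : Type*} [TopologicalSpace Z] [MulAction G Z]
    (ι : G → Z) (q : Z) : Prop :=
  q ∈ bdryZ ι ∧ {g : G | g • q = q}.Infinite ∧
    (∃ K : Set Z, IsCompact K ∧ K ⊆ bdryZ ι \ {q} ∧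
      ∀ ξ ∈ bdryZ ι \ {q}, ∃ g : G, g • q = q ∧ g • ξ ∈ K) ∧
    ∀ K : Set Z, IsCompact K → K ⊆ bdryZ ι \ {q} →
      {g : G | g • q = q ∧ ((fun z : Z => g • z) '' K ∩ K).Nonempty}.Finite

/-- The shadow `Π_r(g)`: boundary points `ξ` such that some geodesic ray `[1,ξ]` meets
the ball `B(g,r)`. -/
def shadow {G : Type*} [Group G] {Z : Type*} [TopologicalSpace Z] (S : Set G) (ι : G → Z)
    (r : ℝ) (g : G) : Set Z :=
  {ξ | ξ ∈ bdryZ ι ∧ ∃ γ ∈ raysTo S ι ξ 1, ∃ n : ℕ, (wdist S (γ n) g : ℝ) ≤ r}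

/-- The strong shadow `ϖ_r(g)`: boundary points `ξ` such that every geodesic ray `[1,ξ]`
meets the ball `B(g,r)`. -/
def strongShadow {G : Type*} [Group G] {Z : Type*} [TopologicalSpace Z] (S : Set G)
    (ι : G → Z) (r : ℝ) (g : G) : Set Z :=
  {ξ | ξ ∈ bdryZ ι ∧ (raysTo S ι ξ 1).Nonempty ∧
      ∀ γ ∈ raysTo S ι ξ 1, ∃ n : ℕ, (wdist S (γ n) g : ℝ) ≤ r}

/-- The partial shadow `Π_{r,ε,R}(g)`: boundary points `ξ` such that some geodesic ray
`[1,ξ]` meets `B(g,r)` and contains an `(ε,R)`-transition point in `B(g,2R)`. -/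
def partialShadow {G : Type*} [Group G] {Z : Type*} [TopologicalSpace Z] (S : Set G)
    (ι : G → Z) (ℙ : Set (Set G)) (r ε R : ℝ) (g : G) : Set Z :=
  {ξ | ξ ∈ bdryZ ι ∧ ∃ γ ∈ raysTo S ι ξ 1,
      (∃ n : ℕ, (wdist S (γ n) g : ℝ) ≤ r) ∧
      ∃ i : ℕ, transitionAtRay S ℙ γ i ε R ∧ (wdist S (γ i) g : ℝ) ≤ 2 * R}

/-- The limit set of `A ⊆ G`: accumulation points of `ι(A)` in the boundary. -/
def limitSet {G : Type*} {Z : Type*} [TopologicalSpace Z] (ι : G → Z) (A : Set G) : Set Z :=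
  bdryZ ι ∩ closure (ι '' A)

/-- The Busemann (horofunction) limit `b_γ(x) = lim_t (d(x, γ(t)) − t)` along a ray `γ`. -/
noncomputable def busemann {G : Type*} [Group G] (S : Set G) (γ : ℕ → G) (x : G) : ℝ :=
  Filter.limsup (fun t : ℕ => (wdist S x (γ t) : ℝ) - (t : ℝ)) Filter.atTop

/-- The horofunction cocycle `B_ξ(x,y) = sup_{γ : γ₊ = ξ} (b_γ(x) − b_γ(y))` at `ξ`. -/
noncomputable def horoCocycle {G : Type*} [Group G] {Z : Type*} [TopologicalSpace Z]
    (S : Set G) (ι : G → Z) (ξ : Z) (x y : G) : ℝ :=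
  sSup ((fun γ => busemann S γ x - busemann S γ y) '' raysEnding S ι ξ)

/-- `Z` is a compactification of the Cayley graph of `(G,S)` by a boundary on which `G` acts
geometrically finitely: `ι` is an equivariant dense embedding of `G`, geodesic rays converge
to boundary points, every boundary point is the endpoint of geodesic rays from every vertex,
and every boundary point is either conical or bounded parabolic. -/
def IsGeomFinBoundary (G : Type*) [Group G] {Z : Type*} [TopologicalSpace Z] [MulAction G Z]
    (S : Set G) (ι : G → Z) : Prop :=
  Function.Injective ι ∧
  (∀ g h : G, g • ι h = ι (g * h)) ∧
  (∀ g : G, Continuous (fun z : Z => g • z)) ∧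
  Dense (Set.range ι) ∧
  (bdryZ ι).Nontrivial ∧
  (∀ ξ ∈ bdryZ ι, ∀ v : G, (raysTo S ι ξ v).Nonempty) ∧
  (∀ γ : ℕ → G, IsGeodesicRay S γ →
      ∃ ξ ∈ bdryZ ι, Filter.Tendsto (fun n => ι (γ n)) Filter.atTop (nhds ξ)) ∧
  (∀ ξ ∈ bdryZ ι, ξ ∈ conicalPts G ι ∨ IsBddParabolicPt G ι ξ)
open MeasureTheory

/-- A `σ`-dimensional visual density: a `G`-equivariant family of finite positive Radon
measures on the boundary `Z ∖ ι(G)`, mutually absolutely continuous with Radon–Nikodym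
derivatives pinched between `exp(∓σ d(v,w))` (up to a uniform multiplicative constant). -/
def IsVisualDensity {G : Type*} [Group G] {Z : Type*} [MetricSpace Z] [MeasurableSpace Z]
    [MulAction G Z] (S : Set G) (ι : G → Z) (σ : ℝ) (μ : G → Measure Z) : Prop :=
  (∀ v : G, IsFiniteMeasure (μ v)) ∧ (∀ v : G, μ v ≠ 0) ∧
  (∀ v : G, μ v (Set.range ι) = 0) ∧
  (∀ g v : G, μ (g * v) = Measure.map (fun z : Z => g • z) (μ v)) ∧
  ∃ C : ℝ, 0 < C ∧ ∀ v w : G, ∀ A : Set Z,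
    ENNReal.ofReal (C⁻¹ * Real.exp (-(σ * (wdist S v w : ℝ)))) * μ w A ≤ μ v A ∧
    μ v A ≤ ENNReal.ofReal (C * Real.exp (σ * (wdist S v w : ℝ))) * μ w A

/-- A `σ`-dimensional quasi-conformal density: a visual density whose Radon–Nikodym
derivatives satisfy `dμ_v/dμ_w(ξ) ≍ exp(−σ B_ξ(v,w))` at almost every conical point `ξ`. -/
def IsQuasiConformalDensity {G : Type*} [Group G] {Z : Type*} [MetricSpace Z]
    [MeasurableSpace Z] [MulAction G Z] (S : Set G) (ι : G → Z) (σ : ℝ)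
    (μ : G → Measure Z) : Prop :=
  IsVisualDensity S ι σ μ ∧
  ∃ C : ℝ, 0 < C ∧ ∀ v w : G,
    ∀ᵐ ξ ∂(μ w), ξ ∈ conicalPts G ι →
      ENNReal.ofReal (C⁻¹ * Real.exp (-(σ * horoCocycle S ι ξ v w))) ≤
          (μ v).rnDeriv (μ w) ξ ∧
        (μ v).rnDeriv (μ w) ξ ≤
          ENNReal.ofReal (C * Real.exp (-(σ * horoCocycle S ι ξ v w)))

/-- The weight `H(d(v,g)) e^{−s d(v,g)}` of the orbit point `g` in Patterson's construction. -/
noncomputable def psWeight {G : Type*} [Group G] (S : Set G) (H : ℝ → ℝ) (s : ℝ)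
    (v g : G) : ℝ≥0∞ :=
  ENNReal.ofReal (H (wdist S v g : ℝ) * Real.exp (-(s * (wdist S v g : ℝ))))

/-- The normalized approximating measure `μ_v^s` in Patterson's construction. -/
noncomputable def psApprox {G : Type*} [Group G] {Z : Type*} [MeasurableSpace Z] (S : Set G)
    (ι : G → Z) (H : ℝ → ℝ) (s : ℝ) (v : G) : Measure Z :=
  (∑' g : G, psWeight S H s 1 g)⁻¹ •
    Measure.sum (fun g : G => psWeight S H s v g • Measure.dirac (ι g))

/-- Patterson's slowly growing adjustment function `H`: monotone, positive, subexponentially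
growing, making the adjusted Poincaré series diverge exactly up to the growth rate `δ_G`. -/
def IsPattersonFunction {G : Type*} [Group G] (S : Set G) (H : ℝ → ℝ) : Prop :=
  Monotone H ∧ (∀ t : ℝ, 0 < H t) ∧
  (∀ ε > (0 : ℝ), ∃ t₀ : ℝ, ∀ t > t₀, ∀ a > (0 : ℝ),
      H (a + t) ≤ Real.exp (a * ε) * H t) ∧
  (∀ s : ℝ, s ≤ growthRate S →
      ¬ Summable (fun g : G => H (wdist S 1 g : ℝ) * Real.exp (-(s * (wdist S 1 g : ℝ))))) ∧
  (∀ s : ℝ, growthRate S < s →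
      Summable (fun g : G => H (wdist S 1 g : ℝ) * Real.exp (-(s * (wdist S 1 g : ℝ)))))

/-- `μ` is a family of Patterson–Sullivan measures for `(G,S)` on the compactification `Z`:
a weak-* limit, along a sequence `s_i ↓ δ_G`, of the normalized measures
`μ_v^{s}` built from a Patterson adjustment function `H`. -/
def IsPSMeasures {G : Type*} [Group G] {Z : Type*} [MetricSpace Z] [MeasurableSpace Z]
    (S : Set G) (ι : G → Z) (μ : G → Measure Z) : Prop :=
  (∀ v : G, IsFiniteMeasure (μ v)) ∧
  ∃ (H : ℝ → ℝ) (sq : ℕ → ℝ), IsPattersonFunction S H ∧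
    (∀ n : ℕ, growthRate S < sq n) ∧
    Filter.Tendsto sq Filter.atTop (nhds (growthRate S)) ∧
    ∀ (v : G) (f : C(Z, ℝ)),
      Filter.Tendsto (fun n => ∫ z, f z ∂(psApprox S ι H (sq n) v)) Filter.atTop
        (nhds (∫ z, f z ∂(μ v)))

/-!
Along a geodesic ray from `v` to `ξ` the cocycle `B_ξ(v, ·)` equals the distance from `v`, so at
almost every conical `ξ` the bound `dμ_v/dμ_g(ξ) ≤ C exp(−σ d(v,g))` holds for infinitely many `g`.
By equivariance all the `μ_g` have the same mass, so for a fixed `g` this bound holds on a set of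
`μ_v`-measure at most a constant times `exp(−σ d(v,g))`. If the Poincaré series converged, the
Borel–Cantelli lemma would make the conical points a null set.
-/

section Preliminaries

lemma countable_of_submonoidClosure_eq_top {M : Type*} [Monoid M] {s : Set M} (hs : s.Countable)
    (hgen : Submonoid.closure s = ⊤) : Countable M := by
  have : Countable s := hs.to_subtype
  refine Function.Surjective.countable (f := fun l : List s => (l.map Subtype.val).prod) fun g => ?_
  obtain ⟨l, hl, hprod⟩ := Submonoid.exists_list_of_mem_closure (hgen ▸ Submonoid.mem_top g)
  lift l to List s using hl
  exact ⟨l, hprod⟩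

lemma summable_comp_iff_summable_ncard_fiber_mul {α β : Type*} {φ : α → β}
    (hφ : ∀ b, (φ ⁻¹' {b}).Finite) {f : β → ℝ} (hf : 0 ≤ f) :
    Summable (f ∘ φ) ↔ Summable fun b => (φ ⁻¹' {b}).ncard * f b := by
  rw [summable_partition (f := f ∘ φ) (fun a => hf (φ a)) (s := fun b => φ ⁻¹' {b})
    fun a => existsUnique_eq']
  have hconst (b : β) : (fun a : φ ⁻¹' {b} => (f ∘ φ) a) = fun _ => f b :=
    funext fun a => congrArg f a.2
  have hfiber (b : β) : Summable fun _ : φ ⁻¹' {b} => f b :=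
    have := (hφ b).to_subtype
    .of_finite
  simp only [hconst, tsum_const, nsmul_eq_mul, hfiber, implies_true, true_and]
  rfl

open scoped Pointwise in
lemma finite_pow {M : Type*} [Monoid M] {s : Set M} (hs : s.Finite) (n : ℕ) : (s ^ n).Finite := by
  classical
  obtain ⟨t, rfl⟩ := hs.exists_finset_coe
  rw [← Finset.coe_pow]
  exact (t ^ n).finite_toSet

open scoped Pointwise in
lemma ncard_pow_le {M : Type*} [Monoid M] {s : Set M} (hs : s.Finite) (n : ℕ) :
    (s ^ n).ncard ≤ s.ncard ^ n := by
  classical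
  obtain ⟨t, rfl⟩ := hs.exists_finset_coe
  rw [← Finset.coe_pow, ncard_coe_finset, ncard_coe_finset]
  exact Finset.card_pow_le

end Preliminaries

section WordMetric

variable {G : Type*} [Group G] {S : Set G}

open scoped Pointwise in
lemma IsSymmGen.submonoidClosure_eq_top (hS : IsSymmGen S) : Submonoid.closure S = ⊤ := by
  obtain ⟨-, hgen, hinv, -⟩ := hS
  have hSinv : S ∪ S⁻¹ = S := union_eq_left.2 fun s hs => inv_inv s ▸ hinv _ hs
  rw [← hSinv, ← Subgroup.closure_toSubmonoid, hgen, Subgroup.top_toSubmonoid]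

lemma wdist_one_left (g : G) : wdist S 1 g = wlen S g := by
  simp [wdist]

lemma wlen_prod_le_length {w : List G} (hw : ∀ x ∈ w, x ∈ S) : wlen S w.prod ≤ w.length :=
  Nat.sInf_le ⟨w, hw, rfl, rfl⟩

lemma exists_list_length_eq_wlen (hgen : Submonoid.closure S = ⊤) (g : G) :
    ∃ w : List G, (∀ x ∈ w, x ∈ S) ∧ w.length = wlen S g ∧ w.prod = g := by
  obtain ⟨w, hw, hprod⟩ := Submonoid.exists_list_of_mem_closure (hgen ▸ Submonoid.mem_top g)
  exact Nat.sInf_mem (s := {n | ∃ w : List G, (∀ x ∈ w, x ∈ S) ∧ w.length = n ∧ w.prod = g})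
    ⟨w.length, w, hw, rfl, hprod⟩

lemma wlen_mul_le (hgen : Submonoid.closure S = ⊤) (g h : G) :
    wlen S (g * h) ≤ wlen S g + wlen S h := by
  obtain ⟨u, hu, hul, rfl⟩ := exists_list_length_eq_wlen hgen g
  obtain ⟨w, hw, hwl, rfl⟩ := exists_list_length_eq_wlen hgen h
  rw [← hul, ← hwl, ← List.prod_append, ← List.length_append]
  exact wlen_prod_le_length fun x hx => (List.mem_append.1 hx).elim (hu x) (hw x)

lemma wdist_triangle (hgen : Submonoid.closure S = ⊤) (x y z : G) :
    wdist S x z ≤ wdist S x y + wdist S y z := by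
  simpa [wdist, mul_assoc] using wlen_mul_le hgen (x⁻¹ * y) (y⁻¹ * z)

open scoped Pointwise in
lemma setOf_wlen_le_subset_pow (hgen : Submonoid.closure S = ⊤) (n : ℕ) :
    {g | wlen S g ≤ n} ⊆ (insert 1 S) ^ n := by
  intro g hg
  obtain ⟨w, hw, hwl, rfl⟩ := exists_list_length_eq_wlen hgen g
  have hmem : w.prod ∈ (insert 1 S) ^ w.length :=
    mem_pow.2 ⟨fun i => ⟨w[i], mem_insert_of_mem 1 (hw _ (List.getElem_mem _))⟩, by simp⟩
  exact pow_subset_pow_right (mem_insert 1 S) (hwl.trans_le hg) hmem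

lemma finite_setOf_wlen_le (hfin : S.Finite) (hgen : Submonoid.closure S = ⊤) (n : ℕ) :
    {g | wlen S g ≤ n}.Finite :=
  (finite_pow (hfin.insert 1) n).subset (setOf_wlen_le_subset_pow hgen n)

lemma ncard_setOf_wlen_le_le_pow (hfin : S.Finite) (hgen : Submonoid.closure S = ⊤) (n : ℕ) :
    {g | wlen S g ≤ n}.ncard ≤ (insert 1 S).ncard ^ n :=
  (ncard_le_ncard (setOf_wlen_le_subset_pow hgen n) (finite_pow (hfin.insert 1) n)).trans
    (ncard_pow_le (hfin.insert 1) n)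

end WordMetric

section GrowthRate

variable {G : Type*} [Group G] {S A : Set G}

variable (A) in
lemma log_ncard_div_le (hfin : S.Finite) (hgen : Submonoid.closure S = ⊤) (n : ℕ) :
    Real.log {g | g ∈ A ∧ wlen S g ≤ n}.ncard / n ≤ Real.log (insert 1 S).ncard := by
  set k := {g | g ∈ A ∧ wlen S g ≤ n}.ncard
  have hk : k ≤ (insert 1 S).ncard ^ n :=
    (ncard_le_ncard (fun _ hg => hg.2) (finite_setOf_wlen_le hfin hgen n)).trans
      (ncard_setOf_wlen_le_le_pow hfin hgen n)
  refine div_le_of_le_mul₀ n.cast_nonneg (Real.log_natCast_nonneg _) ?_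
  rw [mul_comm, ← Real.log_pow, ← Nat.cast_pow]
  rcases k.eq_zero_or_pos with hk0 | hkpos
  · simpa [hk0] using Real.log_natCast_nonneg ((insert 1 S).ncard ^ n)
  · gcongr

lemma eventually_ncard_le_exp_of_growthRateOn_lt (hfin : S.Finite)
    (hgen : Submonoid.closure S = ⊤) {τ : ℝ} (h : growthRateOn S A < τ) :
    ∀ᶠ n : ℕ in atTop, ({g | g ∈ A ∧ wlen S g ≤ n}.ncard : ℝ) ≤ Real.exp (τ * n) := by
  have hlog := eventually_lt_of_limsup_lt h
    (isBoundedUnder_of ⟨_, log_ncard_div_le A hfin hgen⟩)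
  filter_upwards [hlog, eventually_gt_atTop 0] with n hn hn0
  rw [div_lt_iff₀ (Nat.cast_pos.2 hn0)] at hn
  rcases {g | g ∈ A ∧ wlen S g ≤ n}.ncard.eq_zero_or_pos with hk0 | hkpos
  · simpa [hk0] using (Real.exp_pos (τ * n)).le
  · exact (Real.log_le_iff_le_exp (Nat.cast_pos.2 hkpos)).1 hn.le

lemma summable_exp_neg_wlen_of_growthRateOn_lt (hfin : S.Finite)
    (hgen : Submonoid.closure S = ⊤) {σ : ℝ} (h : growthRateOn S A < σ) :
    Summable fun a : A => Real.exp (-(σ * wlen S (a : G))) := by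
  obtain ⟨τ, hτ, hτσ⟩ := exists_between h
  set φ : A → ℕ := fun a => wlen S (a : G)
  have hball (n : ℕ) : {g | g ∈ A ∧ wlen S g ≤ n}.Finite :=
    (finite_setOf_wlen_le hfin hgen n).subset fun _ hg => hg.2
  have hmaps (n : ℕ) : ∀ a ∈ φ ⁻¹' {n}, (a : G) ∈ {g | g ∈ A ∧ wlen S g ≤ n} :=
    fun a ha => ⟨a.2, le_of_eq ha⟩
  have hfiber (n : ℕ) : (φ ⁻¹' {n}).Finite :=
    .of_finite_image ((hball n).subset (image_subset_iff.2 (hmaps n))) Subtype.val_injective.injOn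
  refine (summable_comp_iff_summable_ncard_fiber_mul (f := fun n : ℕ => Real.exp (-(σ * n))) hfiber
    fun n => (Real.exp_pos _).le).2 ?_
  have hgeom : Summable fun n : ℕ => Real.exp (n * (τ - σ)) :=
    Real.summable_exp_nat_mul_iff.2 (sub_neg.2 hτσ)
  refine hgeom.of_norm_bounded_eventually_nat ?_
  filter_upwards [eventually_ncard_le_exp_of_growthRateOn_lt hfin hgen hτ] with n hn
  rw [Real.norm_of_nonneg (by positivity)]
  calc (φ ⁻¹' {n}).ncard * Real.exp (-(σ * n))
      ≤ {g | g ∈ A ∧ wlen S g ≤ n}.ncard * Real.exp (-(σ * n)) := by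
        gcongr
        exact ncard_le_ncard_of_injOn _ (hmaps n) Subtype.val_injective.injOn (hball n)
    _ ≤ Real.exp (τ * n) * Real.exp (-(σ * n)) := by gcongr
    _ = Real.exp (n * (τ - σ)) := by rw [← Real.exp_add]; ring_nf

lemma summable_exp_neg_wdist_of_growthRate_lt (hfin : S.Finite)
    (hgen : Submonoid.closure S = ⊤) {σ : ℝ} (h : growthRate S < σ) :
    Summable fun g : G => Real.exp (-(σ * wdist S 1 g)) := by
  simpa [Function.comp_def, wdist_one_left] using (Equiv.Set.univ G).symm.summable_iff.2
    (summable_exp_neg_wlen_of_growthRateOn_lt hfin hgen h)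

end GrowthRate

section Busemann

variable {G : Type*} [Group G] {S : Set G} {γ : ℕ → G}

lemma IsGeodesicRay.wdist_of_le (hγ : IsGeodesicRay S γ) {i j : ℕ} (hij : i ≤ j) :
    wdist S (γ i) (γ j) = j - i := by
  have := hγ i j
  omega

lemma IsGeodesicRay.injective (hγ : IsGeodesicRay S γ) : Function.Injective γ := by
  intro i j hij
  have h := hγ i j
  rw [hij, hγ j j] at h
  omega

lemma IsGeodesicRay.busemann_apply (hγ : IsGeodesicRay S γ) (n : ℕ) :
    busemann S γ (γ n) = -n := by
  have hev : (fun t : ℕ => (wdist S (γ n) (γ t) : ℝ) - t) =ᶠ[atTop] fun _ => -n := by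
    filter_upwards [eventually_ge_atTop n] with t ht
    rw [hγ.wdist_of_le ht, Nat.cast_sub ht]
    ring
  rw [busemann, limsup_congr hev, limsup_const]

lemma IsGeodesicRay.isBoundedUnder_wdist_sub (hγ : IsGeodesicRay S γ)
    (hgen : Submonoid.closure S = ⊤) (x : G) :
    IsBoundedUnder (· ≤ ·) atTop fun t : ℕ => (wdist S x (γ t) : ℝ) - t := by
  refine isBoundedUnder_of ⟨wdist S x (γ 0), fun t => ?_⟩
  have h := wdist_triangle hgen x (γ 0) (γ t)
  rw [hγ.wdist_of_le t.zero_le, Nat.sub_zero] at h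
  rw [sub_le_iff_le_add]
  exact_mod_cast h

lemma IsGeodesicRay.isCoboundedUnder_wdist_sub (hγ : IsGeodesicRay S γ)
    (hgen : Submonoid.closure S = ⊤) (x : G) :
    IsCoboundedUnder (· ≤ ·) atTop fun t : ℕ => (wdist S x (γ t) : ℝ) - t := by
  refine IsBoundedUnder.isCoboundedUnder_le
    (isBoundedUnder_of ⟨-(wdist S (γ 0) x : ℝ), fun t => ?_⟩)
  have h := wdist_triangle hgen (γ 0) x (γ t)
  rw [hγ.wdist_of_le t.zero_le, Nat.sub_zero] at h
  rw [neg_le_sub_iff_le_add']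
  exact_mod_cast h

lemma IsGeodesicRay.busemann_le_add (hγ : IsGeodesicRay S γ) (hgen : Submonoid.closure S = ⊤)
    (x y : G) : busemann S γ x ≤ wdist S x y + busemann S γ y := by
  have hy := hγ.isBoundedUnder_wdist_sub hgen y
  rw [busemann, busemann,
    ← limsup_const_add _ _ _ hy (hγ.isCoboundedUnder_wdist_sub hgen y)]
  refine limsup_le_limsup (.of_forall fun t => ?_) (hγ.isCoboundedUnder_wdist_sub hgen x)
    (isBoundedUnder_le_add isBoundedUnder_const hy)
  have h : (wdist S x (γ t) : ℝ) ≤ wdist S x y + wdist S y (γ t) :=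
    mod_cast wdist_triangle hgen x y (γ t)
  dsimp only
  linarith

lemma horoCocycle_apply_of_mem_raysTo (hgen : Submonoid.closure S = ⊤) {Z : Type*}
    [TopologicalSpace Z] {ι : G → Z} {ξ : Z} {v : G} (hγ : γ ∈ raysTo S ι ξ v) (n : ℕ) :
    horoCocycle S ι ξ v (γ n) = wdist S v (γ n) := by
  obtain ⟨rfl, hray, hlim⟩ := hγ
  refine IsGreatest.csSup_eq ⟨⟨γ, ⟨hray, hlim⟩, ?_⟩, ?_⟩
  · simp [hray.busemann_apply, hray.wdist_of_le n.zero_le]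
  · rintro _ ⟨β, ⟨hβ, -⟩, rfl⟩
    exact sub_le_iff_le_add.2 (hβ.busemann_le_add hgen _ _)

end Busemann

section RadonNikodym

variable {X : Type*} [MeasurableSpace X]

lemma measure_setOf_rnDeriv_le_le {μ ν : Measure X} [μ.HaveLebesgueDecomposition ν]
    (hac : μ ≪ ν) (c : ℝ≥0∞) :
    μ {x | μ.rnDeriv ν x ≤ c} ≤ c * ν {x | μ.rnDeriv ν x ≤ c} := by
  set E := {x | μ.rnDeriv ν x ≤ c}
  calc μ E = ∫⁻ x in E, μ.rnDeriv ν x ∂ν :=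
        (Measure.setLIntegral_rnDeriv' hac
          (measurableSet_le (μ.measurable_rnDeriv ν) measurable_const)).symm
    _ ≤ ∫⁻ _ in E, c ∂ν := setLIntegral_mono measurable_const fun _ hx => hx
    _ = c * ν E := setLIntegral_const _ _

lemma ae_finite_setOf_rnDeriv_le {I : Type*} [Countable I] {μ : Measure X} {ν : I → Measure X}
    [∀ i, μ.HaveLebesgueDecomposition (ν i)] (hac : ∀ i, μ ≪ ν i) {c : I → ℝ≥0∞}
    (hc : ∑' i, c i * ν i univ ≠ ∞) :
    ∀ᵐ x ∂μ, {i | μ.rnDeriv (ν i) x ≤ c i}.Finite := by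
  refine ae_finite_setOfPred_mem (s := fun i => {x | μ.rnDeriv (ν i) x ≤ c i})
    (ne_top_of_le_ne_top hc (ENNReal.tsum_le_tsum fun i => ?_))
  exact (measure_setOf_rnDeriv_le_le (hac i) (c i)).trans (by gcongr; exact subset_univ _)

end RadonNikodym

section Density

variable {G : Type*} [Group G] {Z : Type*} [MetricSpace Z] [MeasurableSpace Z] [MulAction G Z]
  {S : Set G} {ι : G → Z} {σ : ℝ} {μ : G → Measure Z}

lemma IsVisualDensity.absolutelyContinuous (hμ : IsVisualDensity S ι σ μ) (v w : G) :
    μ v ≪ μ w := by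
  obtain ⟨-, -, -, -, C, -, hC⟩ := hμ
  intro A hA
  simpa [hA] using (hC v w A).2

lemma IsVisualDensity.measure_univ_eq (hμ : IsVisualDensity S ι σ μ) (v w : G) :
    μ v univ = μ w univ := by
  obtain ⟨-, hne, -, hequiv, -⟩ := hμ
  have hmap : μ v = (μ w).map fun z => (v * w⁻¹) • z := by
    rw [← hequiv, inv_mul_cancel_right]
  have hmeas : AEMeasurable (fun z => (v * w⁻¹) • z) (μ w) := by
    by_contra h
    exact hne v (hmap.trans (Measure.map_of_not_aemeasurable h))
  rw [hmap, Measure.map_apply_of_aemeasurable hmeas .univ, preimage_univ]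

lemma IsQuasiConformalDensity.exists_ae_infinite_setOf_rnDeriv_le [Countable G]
    (hμ : IsQuasiConformalDensity S ι σ μ) (hgen : Submonoid.closure S = ⊤) {v : G}
    (hrays : ∀ ξ ∈ conicalPts G ι, (raysTo S ι ξ v).Nonempty) :
    ∃ C : ℝ, ∀ᵐ ξ ∂μ v, ξ ∈ conicalPts G ι →
      {g | (μ v).rnDeriv (μ g) ξ ≤
        ENNReal.ofReal (C * Real.exp (-(σ * wdist S v g)))}.Infinite := by
  obtain ⟨hvis, C, -, hconf⟩ := hμ
  refine ⟨C, ?_⟩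
  have hupper : ∀ᵐ ξ ∂μ v, ∀ g, ξ ∈ conicalPts G ι → (μ v).rnDeriv (μ g) ξ ≤
      ENNReal.ofReal (C * Real.exp (-(σ * horoCocycle S ι ξ v g))) :=
    ae_all_iff.2 fun g => (hvis.absolutelyContinuous v g).ae_le <|
      (hconf v g).mono fun ξ h hξ => (h hξ).2
  filter_upwards [hupper] with ξ hξ hcon
  obtain ⟨γ, hγ⟩ := hrays ξ hcon
  refine (infinite_range_of_injective hγ.2.1.injective).mono ?_
  rintro _ ⟨n, rfl⟩
  simpa only [horoCocycle_apply_of_mem_raysTo hgen hγ, mem_ofPred_eq] using hξ (γ n) hcon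

lemma IsQuasiConformalDensity.measure_conicalPts_eq_zero [Countable G]
    (hμ : IsQuasiConformalDensity S ι σ μ) (hgen : Submonoid.closure S = ⊤) {v : G}
    (hrays : ∀ ξ ∈ conicalPts G ι, (raysTo S ι ξ v).Nonempty)
    (hsum : Summable fun g : G => Real.exp (-(σ * wdist S v g))) :
    μ v (conicalPts G ι) = 0 := by
  have hfin : ∀ w, IsFiniteMeasure (μ w) := hμ.1.1
  obtain ⟨C, hinf⟩ := hμ.exists_ae_infinite_setOf_rnDeriv_le hgen hrays
  have htsum : ∑' g, ENNReal.ofReal (C * Real.exp (-(σ * wdist S v g))) * μ g univ ≠ ∞ := by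
    simp only [hμ.1.measure_univ_eq _ v, ENNReal.tsum_mul_right]
    exact ENNReal.mul_ne_top (hsum.mul_left C).tsum_ofReal_ne_top (measure_ne_top _ _)
  rw [measure_eq_zero_iff_ae_notMem]
  filter_upwards [hinf, ae_finite_setOf_rnDeriv_le (hμ.1.absolutelyContinuous v) htsum]
    with ξ hξ hξfin hcon
  exact hξ hcon hξfin

end Density

theorem qc_density_positive_on_conical_implies_divergent_general
    {G : Type*} [Group G] {Z : Type*} [MetricSpace Z] [MeasurableSpace Z] [MulAction G Z]
    {S : Set G} (hfin : S.Finite) (hgen : Submonoid.closure S = ⊤) {ι : G → Z}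
    (hrays : ∀ ξ ∈ conicalPts G ι, (raysTo S ι ξ 1).Nonempty) {σ : ℝ} {μ : G → Measure Z}
    (hμ : IsQuasiConformalDensity S ι σ μ) (hpos : 0 < μ 1 (conicalPts G ι)) :
    ¬ Summable (fun g : G => Real.exp (-(σ * (wdist S 1 g : ℝ)))) ∧ σ ≤ growthRate S := by
  have := countable_of_submonoidClosure_eq_top hfin.countable hgen
  have hdiv : ¬ Summable fun g : G => Real.exp (-(σ * wdist S 1 g)) := fun hsum =>
    hpos.ne' (hμ.measure_conicalPts_eq_zero hgen hrays hsum)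
  exact ⟨hdiv, not_lt.1 fun h => hdiv (summable_exp_neg_wdist_of_growthRate_lt hfin hgen h)⟩

/-- If a `σ`-dimensional quasi-conformal density on the Bowditch boundary gives positive
measure to the set of conical points, then the Poincaré series `∑_g exp(−σ d(1,g))`
diverges; in particular `σ ≤ δ_G`. -/
theorem qc_density_positive_on_conical_implies_divergent
    {G : Type*} [Group G] [Countable G] {Z : Type*} [MetricSpace Z] [CompactSpace Z]
    [MeasurableSpace Z] [BorelSpace Z] [MulAction G Z]
    (S : Set G) (hS : IsSymmGen S) (hne : ¬ IsElementaryGroup G)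
    (Ps : Set (Subgroup G)) (hPs : Ps.Finite) (hrh : IsRelHypWrt G Ps)
    (ι : G → Z) (hbc : IsGeomFinBoundary G S ι)
    (σ : ℝ) (hσ : 0 ≤ σ)
    (μ : G → MeasureTheory.Measure Z) (hqc : IsQuasiConformalDensity S ι σ μ)
    (hpos : 0 < μ 1 (conicalPts G ι)) :
    ¬ Summable (fun g : G => Real.exp (-(σ * (wdist S 1 g : ℝ)))) ∧
      σ ≤ growthRate S := by
  obtain ⟨-, -, -, -, -, hrays, -⟩ := hbc
  exact qc_density_positive_on_conical_implies_divergent_general hS.1 hS.submonoidClosure_eq_top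
    (fun ξ hξ => hrays ξ hξ.1 1) hqc hpos
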